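/- arXiv:1211.5338 — 3 statements merged into one kernel-verified Lean document; each statement's English description precedes it below -/
import Mathlib

section
/- Let p be a tropical Plücker vector of rank m on {1,…,n}, let B ∈ supp(p), and let v ∈ Σ_B. Then v ∈ L(p) if and only if v is tropically orthogonal to the fundamental circuit c_{B∪{a}} for every a ∈ {1,…,n}∖B. -/
open Finset

def IsTropPlucker (n m : ℕ) (p : Finset (Fin n) → WithTop ℝ) : Prop :=
  ∀ S T : Finset (Fin n), S.card = m - 1 → T.card = m + 1 →
    ∀ i ∈ T \ S, ∃ j ∈ T \ S, j ≠ i ∧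
      p (insert j S) + p (T.erase j) ≤ p (insert i S) + p (T.erase i)

def suppMem (n m : ℕ) (p : Finset (Fin n) → WithTop ℝ) (B : Finset (Fin n)) : Prop :=
  B.card = m ∧ p B ≠ ⊤

def circVec (n : ℕ) (p : Finset (Fin n) → WithTop ℝ) (S : Finset (Fin n)) :
    Fin n → WithTop ℝ := fun i => if i ∈ S then p (S.erase i) else ⊤

def TropOrth (n : ℕ) (x y : Fin n → WithTop ℝ) : Prop :=
  (∀ i, x i + y i = ⊤) ∨
    ∃ i j : Fin n, i ≠ j ∧ x i + y i = x j + y j ∧ ∀ k, x i + y i ≤ x k + y k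

def memL (n m : ℕ) (p : Finset (Fin n) → WithTop ℝ) (x : Fin n → WithTop ℝ) : Prop :=
  ∀ S : Finset (Fin n), S.card = m + 1 → TropOrth n x (circVec n p S)

noncomputable def wgt (n : ℕ) (p : Finset (Fin n) → WithTop ℝ) (v : Fin n → ℝ)
    (B : Finset (Fin n)) : ℝ := -((p B).untopD 0) + ∑ i ∈ B, v i

def memSigma (n m : ℕ) (p : Finset (Fin n) → WithTop ℝ) (B : Finset (Fin n))
    (v : Fin n → ℝ) : Prop :=
  ∀ A : Finset (Fin n), suppMem n m p A → wgt n p v A ≤ wgt n p v B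

def memLocal (n m : ℕ) (p : Finset (Fin n) → WithTop ℝ) (B : Finset (Fin n))
    (v : Fin n → ℝ) : Prop :=
  memSigma n m p B v ∧ memL n m p (fun i => (v i : WithTop ℝ))

noncomputable def fB (n : ℕ) (p : Finset (Fin n) → WithTop ℝ) (B : Finset (Fin n))
    (x : {i : Fin n // i ∈ B} → ℝ) : Fin n → ℝ := fun i =>
  if h : i ∈ B then x ⟨i, h⟩
  else (B.attach.inf fun b => (x b : WithTop ℝ) + p ((insert i B).erase b.1)).untopD 0
    - (p B).untopD 0

noncomputable def augMat (n : ℕ) (B : Finset (Fin n))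
    (V : {i : Fin n // i ∈ B} → {j : Fin n // j ∉ B} → WithTop ℝ) :
    {i : Fin n // i ∈ B} → Fin n → WithTop ℝ := fun i j =>
  if h : j ∈ B then (if j = i.1 then 0 else ⊤) else V i ⟨j, h⟩

noncomputable def tauV (n : ℕ) (B : Finset (Fin n))
    (V : {i : Fin n // i ∈ B} → {j : Fin n // j ∉ B} → WithTop ℝ)
    (A : Finset (Fin n)) : WithTop ℝ :=
  Finset.univ.inf fun σ : {i : Fin n // i ∈ B} ≃ {j : Fin n // j ∈ A} =>
    ∑ i : {i : Fin n // i ∈ B}, augMat n B V i (σ i).1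

/-! A real vector `v` lies in `L(p)` as soon as every element `i` lies in some basis `C` of maximal
`v`-weight: given a circuit of `S` and `i ∈ S`, the Plücker relation for `C \ i` and `S` yields
`j ∈ S \ C` with `p (C \ i ∪ j) + p (S \ j) ≤ p C + p (S \ i)`, while maximality of `C` bounds
`v j + p C` by `v i + p (C \ i ∪ j)`; adding these and cancelling shows that the value at `j` is at
most the value at `i`. Such bases exist because orthogonality to the fundamental circuit of `a` over
a maximal basis `B` says that some exchange of `a` into `B` does not lower the weight. -/

/-- `C` is a basis of maximal `v`-weight, i.e. a basis of the initial matroid of `p` at `v`. -/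
def IsMaxWeightBasis (n m : ℕ) (p : Finset (Fin n) → WithTop ℝ) (v : Fin n → ℝ)
    (C : Finset (Fin n)) : Prop :=
  suppMem n m p C ∧ memSigma n m p C v

section

variable {n m : ℕ} {p : Finset (Fin n) → WithTop ℝ} {v : Fin n → ℝ} {B C S : Finset (Fin n)}
  {a i j : Fin n}

lemma tropOrth_iff {x y : Fin n → WithTop ℝ} :
    TropOrth n x y ↔ ∀ i, x i + y i ≠ ⊤ → ∃ j ≠ i, x j + y j ≤ x i + y i := by
  constructor
  · rintro (htop | ⟨k, l, hkl, heq, hmin⟩) i hi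
    · exact absurd (htop i) hi
    · by_cases hki : k = i
      · subst hki
        exact ⟨l, hkl.symm, heq.ge⟩
      · exact ⟨k, hki, hmin i⟩
  · intro h
    by_cases htop : ∀ i, x i + y i = ⊤
    · exact .inl htop
    obtain ⟨i₀, hi₀⟩ := not_forall.mp htop
    obtain ⟨i, -, hmin⟩ := exists_min_image univ (fun k => x k + y k) ⟨i₀, mem_univ i₀⟩
    obtain ⟨j, hji, hle⟩ := h i (ne_top_of_le_ne_top hi₀ (hmin i₀ (mem_univ i₀)))
    exact .inr ⟨i, j, hji.symm, (hmin j (mem_univ j)).antisymm hle, fun k => hmin k (mem_univ k)⟩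

lemma circVec_of_mem (hi : i ∈ S) : circVec n p S i = p (S.erase i) :=
  if_pos hi

lemma circVec_of_notMem (hi : i ∉ S) : circVec n p S i = ⊤ :=
  if_neg hi

lemma mem_of_circVec_ne_top (h : circVec n p S i ≠ ⊤) : i ∈ S :=
  not_imp_comm.mp circVec_of_notMem h

lemma card_insert_erase_of_mem_of_notMem {α : Type*} [DecidableEq α] {s : Finset α} {i j : α}
    (hi : i ∈ s) (hj : j ∉ s) : #(insert j (s.erase i)) = #s := by
  rw [card_insert_of_notMem (notMem_mono (erase_subset i s) hj), card_erase_add_one hi]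

lemma sum_insert_erase_add {α M : Type*} [DecidableEq α] [AddCommMonoid M] {s : Finset α}
    {i j : α} (f : α → M) (hi : i ∈ s) (hj : j ∉ s) :
    ∑ x ∈ insert j (s.erase i), f x + f i = f j + ∑ x ∈ s, f x := by
  rw [sum_insert (notMem_mono (erase_subset i s) hj), add_assoc, sum_erase_add _ _ hi]

lemma wgt_insert_erase_add (hi : i ∈ C) (hj : j ∉ C) :
    wgt n p v (insert j (C.erase i)) + (v i + (p (insert j (C.erase i))).untopD 0) =
      wgt n p v C + (v j + (p C).untopD 0) := by
  simp only [wgt]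
  linear_combination sum_insert_erase_add v hi hj

lemma IsTropPlucker.exists_exchange (hp : IsTropPlucker n m p) (hC : #C = m) (hS : #S = m + 1)
    (hiC : i ∈ C) (hiS : i ∈ S) :
    ∃ j ∈ S, j ∉ C ∧
      p (insert j (C.erase i)) + p (S.erase j) ≤ p C + p (S.erase i) := by
  obtain ⟨j, hj, hji, hle⟩ := hp (C.erase i) S (by rw [card_erase_of_mem hiC, hC]) hS i
    (mem_sdiff.mpr ⟨hiS, notMem_erase i C⟩)
  obtain ⟨hjS, hjC⟩ := mem_sdiff.mp hj
  rw [insert_erase hiC] at hle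
  exact ⟨j, hjS, fun hjC' => hjC (mem_erase.mpr ⟨hji, hjC'⟩), hle⟩

namespace IsMaxWeightBasis

lemma add_le_add_insert_erase (hC : IsMaxWeightBasis n m p v C) (hi : i ∈ C) (hj : j ∉ C) :
    v j + p C ≤ v i + p (insert j (C.erase i)) := by
  obtain ⟨⟨hcard, hpC⟩, hmax⟩ := hC
  by_cases htop : p (insert j (C.erase i)) = ⊤
  · simp [htop]
  have hle : wgt n p v (insert j (C.erase i)) ≤ wgt n p v C :=
    hmax _ ⟨(card_insert_erase_of_mem_of_notMem hi hj).trans hcard, htop⟩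
  have hwgt := wgt_insert_erase_add (p := p) (v := v) hi hj
  obtain ⟨c, hc⟩ := WithTop.ne_top_iff_exists.mp hpC
  obtain ⟨c', hc'⟩ := WithTop.ne_top_iff_exists.mp htop
  rw [← hc, ← hc', WithTop.untopD_coe, WithTop.untopD_coe] at hwgt
  rw [← hc, ← hc']
  norm_cast
  linarith

lemma insert_erase_of_le (hB : IsMaxWeightBasis n m p v B) (hi : i ∈ B) (hj : j ∉ B)
    (h : v i + p (insert j (B.erase i)) ≤ v j + p B) :
    IsMaxWeightBasis n m p v (insert j (B.erase i)) := by
  obtain ⟨⟨hcard, hpB⟩, hmax⟩ := hB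
  obtain ⟨b, hb⟩ := WithTop.ne_top_iff_exists.mp hpB
  have hfin : p (insert j (B.erase i)) ≠ ⊤ :=
    (WithTop.add_ne_top.mp (ne_top_of_le_ne_top (by simp [hpB]) h)).2
  have hwgt := wgt_insert_erase_add (p := p) (v := v) hi hj
  obtain ⟨b', hb'⟩ := WithTop.ne_top_iff_exists.mp hfin
  rw [← hb, ← hb', WithTop.untopD_coe, WithTop.untopD_coe] at hwgt
  rw [← hb, ← hb'] at h
  norm_cast at h
  refine ⟨⟨(card_insert_erase_of_mem_of_notMem hi hj).trans hcard, hfin⟩, fun A hA => ?_⟩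
  exact (hmax A hA).trans (by linarith)

lemma exists_mem_of_tropOrth (hB : IsMaxWeightBasis n m p v B) (ha : a ∉ B)
    (horth : TropOrth n (fun i => (v i : WithTop ℝ)) (circVec n p (insert a B))) :
    ∃ C, a ∈ C ∧ IsMaxWeightBasis n m p v C := by
  have hca : circVec n p (insert a B) a = p B := by
    rw [circVec_of_mem (mem_insert_self a B), erase_insert ha]
  have hfin : v a + p B ≠ ⊤ := by simp [hB.1.2]
  obtain ⟨k, hka, hle⟩ := tropOrth_iff.mp horth a (by rwa [hca])
  rw [hca] at hle
  have hk : k ∈ insert a B :=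
    mem_of_circVec_ne_top (WithTop.add_ne_top.mp (ne_top_of_le_ne_top hfin hle)).2
  rw [circVec_of_mem hk, erase_insert_of_ne hka.symm] at hle
  exact ⟨insert a (B.erase k), mem_insert_self a _,
    hB.insert_erase_of_le (mem_of_mem_insert_of_ne hk hka) ha hle⟩

end IsMaxWeightBasis

lemma memL_of_forall_exists_isMaxWeightBasis (hp : IsTropPlucker n m p)
    (h : ∀ i, ∃ C, i ∈ C ∧ IsMaxWeightBasis n m p v C) :
    memL n m p (fun i => (v i : WithTop ℝ)) := by
  refine fun S hS => tropOrth_iff.mpr fun i hi => ?_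
  have hci : circVec n p S i ≠ ⊤ := (WithTop.add_ne_top.mp hi).2
  have hiS : i ∈ S := mem_of_circVec_ne_top hci
  rw [circVec_of_mem hiS] at hci
  obtain ⟨C, hiC, hC⟩ := h i
  obtain ⟨j, hjS, hjC, hexch⟩ := hp.exists_exchange hC.1.1 hS hiC hiS
  refine ⟨j, (ne_of_mem_of_not_mem hiC hjC).symm, ?_⟩
  rw [circVec_of_mem hiS, circVec_of_mem hjS]
  set C' := insert j (C.erase i)
  have hC' : p C' ≠ ⊤ :=
    (WithTop.add_ne_top.mp (ne_top_of_le_ne_top (by simp [hC.1.2, hci]) hexch)).1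
  have hmax : v j + p C ≤ v i + p C' := hC.add_le_add_insert_erase hiC hjC
  refine WithTop.le_of_add_le_add_left (WithTop.add_ne_top.mpr ⟨hC.1.2, hC'⟩) ?_
  calc p C + p C' + (v j + p (S.erase j))
      = (v j + p C) + (p C' + p (S.erase j)) := by abel
    _ ≤ (v i + p C') + (p C + p (S.erase i)) := add_le_add hmax hexch
    _ = p C + p C' + (v i + p (S.erase i)) := by abel

end

/-- For `v ∈ Σ_B`, membership in the tropical linear space `L(p)` is
equivalent to tropical orthogonality to all fundamental circuits over the basis `B`. -/
theorem mem_L_iff_orth_fundamental_circuits (n m : ℕ) (hm : 1 ≤ m) (hmn : m ≤ n)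
    (p : Finset (Fin n) → WithTop ℝ) (hp : IsTropPlucker n m p)
    (B : Finset (Fin n)) (hB : suppMem n m p B)
    (v : Fin n → ℝ) (hv : memSigma n m p B v) :
    memL n m p (fun i => (v i : WithTop ℝ)) ↔
      ∀ a : Fin n, a ∉ B →
        TropOrth n (fun i => (v i : WithTop ℝ)) (circVec n p (insert a B)) := by
  constructor
  · exact fun hL a ha => hL _ (by rw [card_insert_of_notMem ha, hB.1])
  · refine fun horth => memL_of_forall_exists_isMaxWeightBasis hp fun a => ?_
    by_cases ha : a ∈ B
    · exact ⟨B, ha, hB, hv⟩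
    · exact IsMaxWeightBasis.exists_mem_of_tropOrth ⟨hB, hv⟩ ha (horth a ha)
end

section
/- Let p be a tropical Plücker vector of rank m on {1,…,n}, let B ∈ supp(p), and assume that for every i ∉ B there exists b ∈ B with (B∪{i})∖{b} ∈ supp(p). Then the map f_B : ℝ^B → ℝⁿ is a piecewise linear homeomorphism between ℝ^B ≅ ℝ^m and the local tropical linear space L(p)_B (with the subspace topology from ℝⁿ): f_B is continuous and injective, its range is exactly L(p)_B, and the induced map from ℝ^B to L(p)_B is a homeomorphism, with continuous inverse given by restricting a vector v ∈ L(p)_B to its coordinates indexed by B. -/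
open Finset

/-!
Subtracting `v` from `p` gives a tropical Plücker vector `q A = p A - ∑ i ∈ A, v i`. In terms of
`q`, the condition `v ∈ Σ_B` says that `B` minimises `q`, and `v ∈ L(p)` says that for every
`(m + 1)`-set `S` the minimum of `q (S \ {i})` over `i ∈ S` is attained twice or equals `⊤`.

As for valuated matroids, `B` is a global minimiser as soon as no exchange `(B ∪ {i}) \ {b}`
improves on it. If moreover every `i` lies in a minimiser, the exchange relation between that
minimiser with `i` removed and `S` shows that `S \ {i}` is never the only minimal term. Hence
membership in `L(p)_B` is a condition on single exchanges: for each `i ∉ B`, the number `v i` is the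
minimum defining `f_B` at `i`, that is, `v` is the image under `f_B` of its restriction to `B`.
-/

theorem card_erase_insert {α : Type*} [DecidableEq α] {s : Finset α} {a b : α} (ha : a ∉ s)
    (hb : b ∈ s) : ((insert a s).erase b).card = s.card := by
  rw [card_erase_of_mem (mem_insert_of_mem hb), card_insert_of_notMem ha, Nat.add_sub_cancel]

theorem continuous_coe_add_const {X M : Type*} [TopologicalSpace X] [TopologicalSpace M]
    [LinearOrder M] [OrderTopology M] [Add M] [ContinuousAdd M] {f : X → M} (hf : Continuous f)
    (c : WithTop M) : Continuous fun x => (f x : WithTop M) + c := by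
  cases c with
  | top => simpa only [WithTop.add_top] using continuous_const
  | coe c => exact WithTop.continuous_coe.comp (hf.add continuous_const)

theorem tropOrth_iff_forall_exists_le {n : ℕ} {x y : Fin n → WithTop ℝ} :
    TropOrth n x y ↔ ∀ i, x i + y i ≠ ⊤ → ∃ j ≠ i, x j + y j ≤ x i + y i := by
  constructor
  · rintro (htop | ⟨a, b, hab, heq, hmin⟩) i hi
    · exact absurd (htop i) hi
    · by_cases hai : a = i
      · exact ⟨b, fun hbi => hab (hai.trans hbi.symm), heq ▸ hmin i⟩
      · exact ⟨a, hai, hmin i⟩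
  · intro h
    by_cases htop : ∀ i, x i + y i = ⊤
    · exact Or.inl htop
    push Not at htop
    obtain ⟨k, hk⟩ := htop
    obtain ⟨i, -, hmin⟩ :=
      exists_min_image univ (fun i => x i + y i) ⟨k, mem_univ k⟩
    obtain ⟨j, hji, hle⟩ := h i (ne_top_of_le_ne_top hk (hmin k (mem_univ k)))
    exact Or.inr ⟨i, j, hji.symm, (hmin j (mem_univ j)).antisymm hle, fun k => hmin k (mem_univ k)⟩

section TropicalPlucker

variable {n m : ℕ} {q : Finset (Fin n) → WithTop ℝ}

theorem IsTropPlucker.le_of_forall_exchange_le (hq : IsTropPlucker n m q) {B : Finset (Fin n)}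
    (hB : suppMem n m q B) (hloc : ∀ i ∉ B, ∀ b ∈ B, q B ≤ q ((insert i B).erase b))
    {A : Finset (Fin n)} (hA : A.card = m) : q B ≤ q A := by
  induction hk : (A \ B).card generalizing A with
  | zero =>
    have hAB : A ⊆ B := sdiff_eq_empty_iff_subset.1 (card_eq_zero.1 hk)
    rw [eq_of_subset_of_card_le hAB (hB.1.trans hA.symm).le]
  | succ k ih =>
    obtain ⟨i, hi⟩ : (A \ B).Nonempty := card_pos.1 (by omega)
    obtain ⟨hiA, hiB⟩ := mem_sdiff.1 hi
    obtain ⟨j, hj, hji, hle⟩ := hq (A.erase i) (insert i B)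
      (by rw [card_erase_of_mem hiA, hA]) (by rw [card_insert_of_notMem hiB, hB.1]) i (by simp)
    rw [insert_erase hiA, erase_insert hiB] at hle
    obtain ⟨hjiB, hjA⟩ := mem_sdiff.1 hj
    have hjB : j ∈ B := (mem_insert.1 hjiB).resolve_left hji
    have hcloser : q B ≤ q (insert j (A.erase i)) := by
      apply ih
      · rw [card_insert_of_notMem hjA, card_erase_add_one hiA, hA]
      · rw [insert_sdiff_of_mem _ hjB, erase_sdiff_comm, card_erase_of_mem hi, hk,
          Nat.add_sub_cancel]
    refine (WithTop.add_le_add_iff_right hB.2).1 ?_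
    calc q B + q B ≤ q (insert j (A.erase i)) + q ((insert i B).erase j) :=
          add_le_add hcloser (hloc i hiB j hjB)
      _ ≤ q A + q B := hle

theorem IsTropPlucker.exists_ne_erase_le_of_mem_of_forall_le (hq : IsTropPlucker n m q)
    {A : Finset (Fin n)} (hA : suppMem n m q A)
    (hmin : ∀ C : Finset (Fin n), C.card = m → q A ≤ q C) {i : Fin n} (hiA : i ∈ A)
    {S : Finset (Fin n)} (hS : S.card = m + 1) (hiS : i ∈ S) :
    ∃ j ∈ S, j ≠ i ∧ q (S.erase j) ≤ q (S.erase i) := by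
  obtain ⟨j, hj, hji, hle⟩ := hq (A.erase i) S (by rw [card_erase_of_mem hiA, hA.1]) hS i
    (mem_sdiff.2 ⟨hiS, notMem_erase i A⟩)
  obtain ⟨hjS, hjA⟩ := mem_sdiff.1 hj
  rw [insert_erase hiA] at hle
  have hle_exchange : q A ≤ q (insert j (A.erase i)) :=
    hmin _ (by rw [card_insert_of_notMem hjA, card_erase_add_one hiA, hA.1])
  refine ⟨j, hjS, hji, (WithTop.add_le_add_iff_left hA.2).1 ?_⟩
  calc q A + q (S.erase j) ≤ q (insert j (A.erase i)) + q (S.erase j) := by gcongr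
    _ ≤ q A + q (S.erase i) := hle

end TropicalPlucker

section Tilt

variable {n m : ℕ} {p : Finset (Fin n) → WithTop ℝ} {v : Fin n → ℝ}

/-- The tilt of `p` by `v`, i.e. the negated `v`-weight `A ↦ p A - ∑ i ∈ A, v i`, with value `⊤`
outside the support of `p`. Minimising it is maximising the `v`-weight. -/
noncomputable def tilt (p : Finset (Fin n) → WithTop ℝ) (v : Fin n → ℝ) (A : Finset (Fin n)) :
    WithTop ℝ :=
  p A + ((-∑ i ∈ A, v i : ℝ) : WithTop ℝ)

theorem tilt_ne_top_iff {A : Finset (Fin n)} : tilt p v A ≠ ⊤ ↔ p A ≠ ⊤ := by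
  simp [tilt]

theorem tilt_erase_add_sum (p : Finset (Fin n) → WithTop ℝ) (v : Fin n → ℝ)
    {S : Finset (Fin n)} {i : Fin n} (hi : i ∈ S) :
    tilt p v (S.erase i) + ((∑ k ∈ S, v k : ℝ) : WithTop ℝ) = v i + p (S.erase i) := by
  rw [tilt, add_assoc, ← WithTop.coe_add, ← add_sum_erase S v hi, add_comm]
  congr 2
  ring

theorem tilt_erase_le_tilt_erase_iff {S : Finset (Fin n)} {i j : Fin n} (hi : i ∈ S)
    (hj : j ∈ S) :
    tilt p v (S.erase i) ≤ tilt p v (S.erase j) ↔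
      (v i : WithTop ℝ) + p (S.erase i) ≤ v j + p (S.erase j) := by
  rw [← tilt_erase_add_sum p v hi, ← tilt_erase_add_sum p v hj,
    WithTop.add_le_add_iff_right WithTop.coe_ne_top]

theorem tilt_le_tilt_iff_wgt_le {A B : Finset (Fin n)} (hA : p A ≠ ⊤) (hB : p B ≠ ⊤) :
    tilt p v B ≤ tilt p v A ↔ wgt n p v A ≤ wgt n p v B := by
  unfold wgt tilt
  lift p A to ℝ using hA with a
  lift p B to ℝ using hB with b
  simp only [WithTop.untopD_coe, ← WithTop.coe_add, WithTop.coe_le_coe]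
  constructor <;> intro h <;> linarith

theorem isTropPlucker_tilt (hp : IsTropPlucker n m p) (v : Fin n → ℝ) :
    IsTropPlucker n m (tilt p v) := by
  intro S T hS hT i hi
  obtain ⟨j, hj, hji, hle⟩ := hp S T hS hT i hi
  have tilt_add_tilt : ∀ k ∈ T \ S, tilt p v (insert k S) + tilt p v (T.erase k) =
      p (insert k S) + p (T.erase k) + ((-∑ a ∈ S, v a - ∑ a ∈ T, v a : ℝ) : WithTop ℝ) := by
    intro k hk
    obtain ⟨hkT, hkS⟩ := mem_sdiff.1 hk
    rw [tilt, tilt, add_add_add_comm, ← WithTop.coe_add, sum_insert hkS,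
      ← add_sum_erase T v hkT]
    congr 2
    ring
  refine ⟨j, hj, hji, ?_⟩
  rw [tilt_add_tilt i hi, tilt_add_tilt j hj]
  gcongr

theorem memSigma_iff_forall_tilt_le {B : Finset (Fin n)} (hB : p B ≠ ⊤) :
    memSigma n m p B v ↔ ∀ A : Finset (Fin n), A.card = m → tilt p v B ≤ tilt p v A := by
  constructor
  · intro h A hA
    by_cases hpA : p A = ⊤
    · simp [tilt, hpA]
    · exact (tilt_le_tilt_iff_wgt_le hpA hB).2 (h A ⟨hA, hpA⟩)
  · exact fun h A hA => (tilt_le_tilt_iff_wgt_le hA.2 hB).1 (h A hA.1)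

theorem tropOrth_circVec_iff {S : Finset (Fin n)} :
    TropOrth n (fun i => (v i : WithTop ℝ)) (circVec n p S) ↔
      ∀ i ∈ S, p (S.erase i) ≠ ⊤ →
        ∃ j ∈ S, j ≠ i ∧ tilt p v (S.erase j) ≤ tilt p v (S.erase i) := by
  rw [tropOrth_iff_forall_exists_le]
  refine forall_congr' fun i => ?_
  by_cases hi : i ∈ S
  · simp only [circVec, hi, if_true, ne_eq, WithTop.add_eq_top, WithTop.coe_ne_top, false_or,
      forall_const]
    refine imp_congr_right fun hpi => exists_congr fun j => ?_
    by_cases hj : j ∈ S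
    · simp [hj, tilt_erase_le_tilt_erase_iff hj hi]
    · simp [hj, hpi]
  · simp [circVec, hi]

theorem memL_coe_of_forall_exists_minimiser (hp : IsTropPlucker n m p)
    (hmin : ∀ i, ∃ A, suppMem n m (tilt p v) A ∧ i ∈ A ∧
      ∀ C : Finset (Fin n), C.card = m → tilt p v A ≤ tilt p v C) :
    memL n m p fun i => (v i : WithTop ℝ) := by
  refine fun S hS => tropOrth_circVec_iff.2 fun i hiS _ => ?_
  obtain ⟨A, hA, hiA, hAmin⟩ := hmin i
  exact (isTropPlucker_tilt hp v).exists_ne_erase_le_of_mem_of_forall_le hA hAmin hiA hS hiS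

theorem memLocal_iff_forall_exchange (hp : IsTropPlucker n m p) {B : Finset (Fin n)}
    (hB : suppMem n m p B) :
    memLocal n m p B v ↔ ∀ i ∉ B,
      (∀ b ∈ B, tilt p v B ≤ tilt p v ((insert i B).erase b)) ∧
        ∃ b ∈ B, tilt p v ((insert i B).erase b) ≤ tilt p v B := by
  have hBtilt : suppMem n m (tilt p v) B := ⟨hB.1, tilt_ne_top_iff.2 hB.2⟩
  rw [memLocal, memSigma_iff_forall_tilt_le hB.2]
  constructor
  · rintro ⟨hmin, hL⟩ i hi
    refine ⟨fun b hb => hmin _ ((card_erase_insert hi hb).trans hB.1), ?_⟩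
    obtain ⟨b, hb, hbi, hle⟩ := tropOrth_circVec_iff.1
      (hL (insert i B) (by rw [card_insert_of_notMem hi, hB.1])) i (mem_insert_self i B)
      (by rw [erase_insert hi]; exact hB.2)
    rw [erase_insert hi] at hle
    exact ⟨b, (mem_insert.1 hb).resolve_left hbi, hle⟩
  · intro h
    have hmin (A : Finset (Fin n)) (hA : A.card = m) : tilt p v B ≤ tilt p v A :=
      (isTropPlucker_tilt hp v).le_of_forall_exchange_le hBtilt (fun i hi => (h i hi).1) hA
    refine ⟨hmin, memL_coe_of_forall_exists_minimiser hp fun i => ?_⟩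
    by_cases hi : i ∈ B
    · exact ⟨B, hBtilt, hi, hmin⟩
    · obtain ⟨b, hb, hle⟩ := (h i hi).2
      have hib : i ≠ b := fun hib => hi (hib ▸ hb)
      exact ⟨(insert i B).erase b,
        ⟨(card_erase_insert hi hb).trans hB.1, ne_top_of_le_ne_top hBtilt.2 hle⟩,
        mem_erase.2 ⟨hib, mem_insert_self i B⟩, fun C hC => hle.trans (hmin C hC)⟩

end Tilt

section Parametrization

variable {n m : ℕ} {p : Finset (Fin n) → WithTop ℝ} {B : Finset (Fin n)}

theorem fB_apply_of_mem (x : {i : Fin n // i ∈ B} → ℝ) {i : Fin n} (hi : i ∈ B) :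
    fB n p B x i = x ⟨i, hi⟩ := by
  simp [fB, hi]

theorem inf_coe_add_exchange_ne_top (x : {i : Fin n // i ∈ B} → ℝ) {i : Fin n}
    (hcov : ∃ b ∈ B, p ((insert i B).erase b) ≠ ⊤) :
    (B.attach.inf fun b => (x b : WithTop ℝ) + p ((insert i B).erase b)) ≠ ⊤ := by
  obtain ⟨b, hb, hpb⟩ := hcov
  exact ne_top_of_le_ne_top (WithTop.add_ne_top.2 ⟨WithTop.coe_ne_top, hpb⟩)
    (inf_le (mem_attach B ⟨b, hb⟩))

theorem fB_apply_eq_iff_of_notMem (hpB : p B ≠ ⊤) {x : {i : Fin n // i ∈ B} → ℝ} {i : Fin n}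
    (hi : i ∉ B) (hcov : ∃ b ∈ B, p ((insert i B).erase b) ≠ ⊤) {c : ℝ} :
    fB n p B x i = c ↔
      (∀ b, (c : WithTop ℝ) + p B ≤ x b + p ((insert i B).erase b)) ∧
        ∃ b, (x b : WithTop ℝ) + p ((insert i B).erase b) ≤ c + p B := by
  have hfB : (fB n p B x i : WithTop ℝ) + p B =
      B.attach.inf fun b => (x b : WithTop ℝ) + p ((insert i B).erase b) := by
    have hinf := inf_coe_add_exchange_ne_top x hcov
    simp only [fB, hi, dite_false]
    lift p B to ℝ using hpB with r
    lift B.attach.inf fun b => (x b : WithTop ℝ) + p ((insert i B).erase b) to ℝ using hinf with t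
    rw [WithTop.untopD_coe, WithTop.untopD_coe, ← WithTop.coe_add, sub_add_cancel]
  have hc : (c : WithTop ℝ) + p B < ⊤ := WithTop.add_lt_top.2 ⟨WithTop.coe_lt_top c, hpB.lt_top⟩
  rw [← WithTop.coe_inj, ← WithTop.add_right_inj hpB, hfB, le_antisymm_iff, and_comm,
    Finset.le_inf_iff, Finset.inf_le_iff hc]
  simp only [mem_attach, forall_const, true_and]

theorem continuous_fB (hcov : ∀ i ∉ B, ∃ b ∈ B, p ((insert i B).erase b) ≠ ⊤) :
    Continuous (fB n p B) := by
  refine continuous_pi fun i => ?_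
  by_cases hi : i ∈ B
  · simpa only [fB_apply_of_mem _ hi] using continuous_apply _
  · simp only [fB, hi, dite_false]
    have hinf : Continuous fun x : {i : Fin n // i ∈ B} → ℝ =>
        B.attach.inf fun b => (x b : WithTop ℝ) + p ((insert i B).erase b) :=
      Continuous.finset_inf_apply fun b _ => continuous_coe_add_const (continuous_apply b) _
    exact ((WithTop.continuousOn_untopD 0).comp_continuous hinf
      fun x => inf_coe_add_exchange_ne_top x (hcov i hi)).sub continuous_const

theorem memLocal_iff_fB_restrict_eq (hp : IsTropPlucker n m p) (hB : suppMem n m p B)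
    (hcov : ∀ i ∉ B, ∃ b ∈ B, p ((insert i B).erase b) ≠ ⊤) {v : Fin n → ℝ} :
    memLocal n m p B v ↔ fB n p B (fun b => v b) = v := by
  rw [memLocal_iff_forall_exchange hp hB, funext_iff]
  refine forall_congr' fun i => ?_
  by_cases hi : i ∈ B
  · simp [hi, fB_apply_of_mem]
  have tilt_le_iff (b : {b // b ∈ B}) : tilt p v B ≤ tilt p v ((insert i B).erase b) ↔
      (v i : WithTop ℝ) + p B ≤ v b + p ((insert i B).erase b) := by
    simpa only [erase_insert hi] using
      tilt_erase_le_tilt_erase_iff (mem_insert_self i B) (mem_insert_of_mem b.2)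
  have le_tilt_iff (b : {b // b ∈ B}) : tilt p v ((insert i B).erase b) ≤ tilt p v B ↔
      (v b : WithTop ℝ) + p ((insert i B).erase b) ≤ v i + p B := by
    simpa only [erase_insert hi] using
      tilt_erase_le_tilt_erase_iff (mem_insert_of_mem b.2) (mem_insert_self i B)
  rw [fB_apply_eq_iff_of_notMem hB.2 hi (hcov i hi)]
  simp only [hi, not_false_eq_true, forall_const, ← tilt_le_iff, ← le_tilt_iff, Subtype.forall,
    Subtype.exists, exists_prop]

end Parametrization

/-- `f_B` is a piecewise linear homeomorphism from `ℝ^B ≅ ℝ^m` onto the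
local tropical linear space `L(p)_B`, with inverse given by restriction of coordinates. -/
theorem local_tropical_linear_space_homeomorph (n m : ℕ) (hm : 1 ≤ m) (hmn : m ≤ n)
    (p : Finset (Fin n) → WithTop ℝ) (hp : IsTropPlucker n m p)
    (B : Finset (Fin n)) (hB : suppMem n m p B)
    (hcov : ∀ i : Fin n, i ∉ B → ∃ b ∈ B, suppMem n m p ((insert i B).erase b)) :
    Continuous (fB n p B) ∧ Function.Injective (fB n p B) ∧
    Set.range (fB n p B) = {v : Fin n → ℝ | memLocal n m p B v} ∧
    ∃ φ : ({i : Fin n // i ∈ B} → ℝ) ≃ₜ {v : Fin n → ℝ // memLocal n m p B v},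
      (∀ x, (φ x : Fin n → ℝ) = fB n p B x) ∧
      (∀ v, φ.symm v = fun b : {i : Fin n // i ∈ B} => (v : Fin n → ℝ) b.1) := by
  have hcov_ne_top (i : Fin n) (hi : i ∉ B) : ∃ b ∈ B, p ((insert i B).erase b) ≠ ⊤ :=
    (hcov i hi).imp fun _ hb => ⟨hb.1, hb.2.2⟩
  have hcont : Continuous (fB n p B) := continuous_fB hcov_ne_top
  have restrict_fB : Function.LeftInverse (fun v (b : {i : Fin n // i ∈ B}) => v b) (fB n p B) :=
    fun x => funext fun b => fB_apply_of_mem x b.2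
  have memLocal_iff (v : Fin n → ℝ) : memLocal n m p B v ↔ fB n p B (fun b => v b) = v :=
    memLocal_iff_fB_restrict_eq hp hB hcov_ne_top
  have memLocal_fB (x : {i : Fin n // i ∈ B} → ℝ) : memLocal n m p B (fB n p B x) :=
    (memLocal_iff _).2 (congrArg _ (restrict_fB x))
  refine ⟨hcont, restrict_fB.injective, Set.Subset.antisymm (Set.range_subset_iff.2 memLocal_fB)
    fun v hv => ⟨_, (memLocal_iff v).1 hv⟩, ?_⟩
  exact ⟨{ toFun := fun x => ⟨fB n p B x, memLocal_fB x⟩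
           invFun := fun v b => v.1 b
           left_inv := restrict_fB
           right_inv := fun v => Subtype.ext ((memLocal_iff v).1 v.2)
           continuous_toFun := hcont.subtype_mk _
           continuous_invFun := continuous_pi fun b =>
              (continuous_apply b.1).comp continuous_subtype_val }, fun _ => rfl, fun _ => rfl⟩
end

section
/- Let p be a tropical Plücker vector of rank m on {1,…,n} with supp(p) nonempty, and let v ∈ ℝⁿ. Let 𝓑_v be the collection of B ∈ supp(p) with w_p(v,B) ≥ w_p(v,A) for all A ∈ supp(p). Then 𝓑_v is nonempty and satisfies the basis exchange property: for all A, B ∈ 𝓑_v and every a ∈ A∖B there exists b ∈ B∖A with (A∖{a})∪{b} ∈ 𝓑_v. In particular, 𝓑_v is the set of bases of a matroid M_v on {1,…,n}. -/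
/-!
In the Plücker relation take `S = A \ {a}` and `T = B ∪ {a}`: the term indexed by `a` is
`p_A + p_B`, so some other index `b`, which must lie in `B \ A`, has a term that is at most this.
Since `A' = (A \ {a}) ∪ {b}` and `B' = (B ∪ {a}) \ {b}` together contain each element as often as
`A` and `B` do, the linear part of the weight cancels and `w(A) + w(B) ≤ w(A') + w(B')`. If `A` and
`B` have maximal weight, then so do both `A'` and `B'`.
-/

open Finset

/-- `B` is a basis of maximal `v`-weight. -/
def MaxWeightBasis (n m : ℕ) (p : Finset (Fin n) → WithTop ℝ) (v : Fin n → ℝ)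
    (B : Finset (Fin n)) : Prop :=
  suppMem n m p B ∧ ∀ A, suppMem n m p A → wgt n p v A ≤ wgt n p v B

section Exchange

variable {ι : Type*} [DecidableEq ι] {A B : Finset ι} {a b : ι}

theorem sum_exchange_add_sum_exchange {M : Type*} [AddCommMonoid M] (f : ι → M)
    (ha : a ∈ A \ B) (hb : b ∈ B \ A) :
    ∑ i ∈ insert b (A.erase a), f i + ∑ i ∈ (insert a B).erase b, f i =
      ∑ i ∈ A, f i + ∑ i ∈ B, f i := by
  obtain ⟨haA, haB⟩ := mem_sdiff.mp ha
  obtain ⟨hbB, hbA⟩ := mem_sdiff.mp hb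
  calc ∑ i ∈ insert b (A.erase a), f i + ∑ i ∈ (insert a B).erase b, f i
      = ∑ i ∈ A.erase a, f i + (∑ i ∈ (insert a B).erase b, f i + f b) := by
        rw [sum_insert fun h ↦ hbA (mem_of_mem_erase h)]
        ac_rfl
    _ = ∑ i ∈ A.erase a, f i + (f a + ∑ i ∈ B, f i) := by
        rw [sum_erase_add _ _ (mem_insert_of_mem hbB), sum_insert haB]
    _ = ∑ i ∈ A, f i + ∑ i ∈ B, f i := by rw [← add_assoc, sum_erase_add _ _ haA]

theorem card_insert_erase_of_mem_of_notMem_s9 (ha : a ∈ A) (hb : b ∉ A) :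
    (insert b (A.erase a)).card = A.card := by
  rw [card_insert_of_notMem fun h ↦ hb (mem_of_mem_erase h), card_erase_add_one ha]

theorem card_erase_insert_of_notMem_of_mem (ha : a ∉ B) (hb : b ∈ B) :
    ((insert a B).erase b).card = B.card := by
  rw [card_erase_of_mem (mem_insert_of_mem hb), card_insert_of_notMem ha, Nat.add_sub_cancel]

theorem exists_matroid_isBase_iff_of_exchange {P : Finset ι → Prop} (hP : ∃ B, P B)
    (hexch : ∀ A B, P A → P B → ∀ a ∈ A \ B, ∃ b ∈ B \ A, P (insert b (A.erase a))) :
    ∃ M : Matroid ι, ∀ S : Set ι, M.IsBase S ↔ ∃ A : Finset ι, (A : Set ι) = S ∧ P A := by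
  have hfin : ∃ S : Set ι, (∃ A : Finset ι, (A : Set ι) = S ∧ P A) ∧ S.Finite := by
    obtain ⟨B, hB⟩ := hP
    exact ⟨B, ⟨B, rfl, hB⟩, B.finite_toSet⟩
  refine ⟨Matroid.ofExistsFiniteIsBase Set.univ _ hfin ?_ fun S _ ↦ S.subset_univ,
    fun S ↦ Iff.rfl⟩
  rintro _ _ ⟨A, rfl, hA⟩ ⟨B, rfl, hB⟩ a ha
  obtain ⟨b, hb, hPb⟩ := hexch A B hA hB a (by exact_mod_cast ha)
  exact ⟨b, by exact_mod_cast hb, insert b (A.erase a), by simp, hPb⟩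

end Exchange

theorem untopD_add_untopD_le_untopD_add_untopD {α : Type*} [Add α] [Preorder α]
    {x y z w : WithTop α} (d : α) (hz : z ≠ ⊤) (hw : w ≠ ⊤) (h : x + y ≤ z + w) :
    x.untopD d + y.untopD d ≤ z.untopD d + w.untopD d := by
  have hxy : x + y < ⊤ :=
    h.trans_lt (WithTop.lt_top_iff_ne_top.mpr (WithTop.add_ne_top.mpr ⟨hz, hw⟩))
  obtain ⟨hx, hy⟩ := WithTop.add_ne_top.mp hxy.ne
  lift x to α using hx
  lift y to α using hy
  lift z to α using hz
  lift w to α using hw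
  exact_mod_cast h

section TropicalPlucker

variable {n m : ℕ} {p : Finset (Fin n) → WithTop ℝ} {v : Fin n → ℝ} {A B : Finset (Fin n)}
  {a b : Fin n}

theorem IsTropPlucker.exists_exchange_s9 (hp : IsTropPlucker n m p) (hA : A.card = m)
    (hB : B.card = m) (ha : a ∈ A \ B) :
    ∃ b ∈ B \ A, p (insert b (A.erase a)) + p ((insert a B).erase b) ≤ p A + p B := by
  obtain ⟨haA, haB⟩ := mem_sdiff.mp ha
  obtain ⟨b, hb, hba, hle⟩ := hp (A.erase a) (insert a B)
    (by rw [card_erase_of_mem haA, hA]) (by rw [card_insert_of_notMem haB, hB])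
    a (by simp)
  rw [insert_erase haA, erase_insert haB] at hle
  exact ⟨b, by simpa [hba] using hb, hle⟩

theorem wgt_add_wgt_le_wgt_exchange_add_wgt_exchange
    (ha : a ∈ A \ B) (hb : b ∈ B \ A) (hA : p A ≠ ⊤) (hB : p B ≠ ⊤)
    (hle : p (insert b (A.erase a)) + p ((insert a B).erase b) ≤ p A + p B) :
    wgt n p v A + wgt n p v B ≤
      wgt n p v (insert b (A.erase a)) + wgt n p v ((insert a B).erase b) := by
  have hp := untopD_add_untopD_le_untopD_add_untopD 0 hA hB hle
  have hv := sum_exchange_add_sum_exchange v ha hb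
  unfold wgt
  linarith

theorem IsTropPlucker.exists_suppMem_exchange (hp : IsTropPlucker n m p)
    (hA : suppMem n m p A) (hB : suppMem n m p B) (ha : a ∈ A \ B) (v : Fin n → ℝ) :
    ∃ b ∈ B \ A, suppMem n m p (insert b (A.erase a)) ∧
      suppMem n m p ((insert a B).erase b) ∧
      wgt n p v A + wgt n p v B ≤
        wgt n p v (insert b (A.erase a)) + wgt n p v ((insert a B).erase b) := by
  obtain ⟨b, hb, hle⟩ := hp.exists_exchange_s9 hA.1 hB.1 ha
  obtain ⟨haA, haB⟩ := mem_sdiff.mp ha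
  obtain ⟨hbB, hbA⟩ := mem_sdiff.mp hb
  obtain ⟨hA', hB'⟩ := WithTop.add_ne_top.mp
    (ne_top_of_le_ne_top (WithTop.add_ne_top.mpr ⟨hA.2, hB.2⟩) hle)
  exact ⟨b, hb, ⟨(card_insert_erase_of_mem_of_notMem_s9 haA hbA).trans hA.1, hA'⟩,
    ⟨(card_erase_insert_of_notMem_of_mem haB hbB).trans hB.1, hB'⟩,
    wgt_add_wgt_le_wgt_exchange_add_wgt_exchange ha hb hA.2 hB.2 hle⟩

theorem MaxWeightBasis.of_wgt_le (hA : MaxWeightBasis n m p v A) (hB : suppMem n m p B)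
    (hle : wgt n p v A ≤ wgt n p v B) : MaxWeightBasis n m p v B :=
  ⟨hB, fun C hC ↦ (hA.2 C hC).trans hle⟩

theorem MaxWeightBasis.symmetric_exchange (hA : MaxWeightBasis n m p v A)
    (hB : MaxWeightBasis n m p v B) (hp : IsTropPlucker n m p) (ha : a ∈ A \ B) :
    ∃ b ∈ B \ A, MaxWeightBasis n m p v (insert b (A.erase a)) ∧
      MaxWeightBasis n m p v ((insert a B).erase b) := by
  obtain ⟨b, hb, hA', hB', hle⟩ := hp.exists_suppMem_exchange hA.1 hB.1 ha v
  have hA'le := hA.2 _ hA'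
  have hB'le := hB.2 _ hB'
  exact ⟨b, hb, hA.of_wgt_le hA' (by linarith), hB.of_wgt_le hB' (by linarith)⟩

theorem exists_maxWeightBasis (hne : ∃ B, suppMem n m p B) (v : Fin n → ℝ) :
    ∃ B, MaxWeightBasis n m p v B := by
  obtain ⟨B, hB, hmax⟩ :=
    Set.exists_max_image {B | suppMem n m p B} (wgt n p v) (Set.toFinite _) hne
  exact ⟨B, hB, hmax⟩

end TropicalPlucker

/-- The collection `𝓑_v` of bases of maximal `v`-weight is nonempty and
satisfies the basis exchange property; in particular it is the set of bases of a
matroid `M_v` on `{1,…,n}`. -/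
theorem max_weight_bases_exchange (n m : ℕ) (hm : 1 ≤ m) (hmn : m ≤ n)
    (p : Finset (Fin n) → WithTop ℝ) (hp : IsTropPlucker n m p)
    (hne : ∃ B, suppMem n m p B) (v : Fin n → ℝ) :
    (∃ B, MaxWeightBasis n m p v B) ∧
    (∀ A B : Finset (Fin n), MaxWeightBasis n m p v A → MaxWeightBasis n m p v B →
      ∀ a ∈ A \ B, ∃ b ∈ B \ A, MaxWeightBasis n m p v (insert b (A.erase a))) ∧
    (∃ M : Matroid (Fin n), ∀ S : Set (Fin n),
      M.IsBase S ↔ ∃ A : Finset (Fin n), (A : Set (Fin n)) = S ∧ MaxWeightBasis n m p v A) := by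
  have hexch : ∀ A B : Finset (Fin n), MaxWeightBasis n m p v A → MaxWeightBasis n m p v B →
      ∀ a ∈ A \ B, ∃ b ∈ B \ A, MaxWeightBasis n m p v (insert b (A.erase a)) := by
    intro A B hA hB a ha
    obtain ⟨b, hb, hA', -⟩ := hA.symmetric_exchange hB hp ha
    exact ⟨b, hb, hA'⟩
  have hex := exists_maxWeightBasis hne v
  exact ⟨hex, hexch, exists_matroid_isBase_iff_of_exchange hex hexch⟩
end
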